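/- arXiv:1712.05454 — 6 statements merged into one kernel-verified Lean document; each statement's English description precedes it below -/
import Mathlib

section
/- Let Λ = {λ_1,…,λ_n} (n ≥ 2) be a finite multiset of complex numbers with critical points Λ'. Then s_2(Λ') = ((n−2)/n)·s_2(Λ) + (1/n²)·s_1(Λ)²; in particular, if Λ is realizable then s_2(Λ') ≥ 0 (i.e., s_2(Λ') is a nonnegative real number). -/
open Polynomial

/-- A finite multiset of complex numbers is realizable if it is the multiset of
roots (with multiplicity) of the characteristic polynomial of some entrywise
nonnegative real matrix. -/
def Realizable (Λ : Multiset ℂ) : Prop :=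
  ∃ (n : ℕ) (A : Matrix (Fin n) (Fin n) ℝ),
    (∀ i j, 0 ≤ A i j) ∧ (A.charpoly.map (algebraMap ℝ ℂ)).roots = Λ

lemma aux_newton (s : Multiset ℂ) :
    (s.map fun z => z ^ 2).sum = s.esymm 1 ^ 2 - 2 * s.esymm 2 ∧ s.esymm 1 = s.sum := by
  induction s using Multiset.induction_on with
  | empty => simp [Multiset.esymm, Multiset.powersetCard_zero_right]
  | cons a s ih =>
    obtain ⟨h1, h2⟩ := ih
    have e1 : (a ::ₘ s).esymm 1 = a + s.sum := by
      rw [← h2]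
      simp [Multiset.esymm, Multiset.powersetCard_cons, add_comm]
    have e2 : (a ::ₘ s).esymm 2 = s.esymm 2 + a * s.sum := by
      rw [← h2]
      simp [Multiset.esymm, Multiset.powersetCard_cons, Multiset.sum_map_mul_left]
    refine ⟨?_, by rw [e1]; simp⟩
    rw [e1, e2, Multiset.map_cons, Multiset.sum_cons, h1, h2]
    ring

lemma aux_charpoly_sq {N : ℕ} (B : Matrix (Fin N) (Fin N) ℂ) :
    (B * B).charpoly = ((B.charpoly.roots.map fun z => z ^ 2).map fun l => X - C l).prod := by
  have hB : ∀ w : ℂ, B.charpoly.eval w = (B.charpoly.roots.map fun z => w - z).prod := by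
    intro w
    have hs := (IsAlgClosed.splits B.charpoly)
    conv_lhs => rw [hs.eq_prod_roots_of_monic B.charpoly_monic]
    simp [eval_multiset_prod, Multiset.map_map]
  have hc : B.charpoly.roots.card = N := by
    rw [IsAlgClosed.card_roots_eq_natDegree, Matrix.charpoly_natDegree_eq_dim, Fintype.card_fin]
  apply Polynomial.funext
  intro t
  obtain ⟨w, rfl⟩ : ∃ w : ℂ, t = w ^ 2 := by
    obtain ⟨w, hw⟩ := IsAlgClosed.exists_pow_nat_eq t (n := 2) (by norm_num)
    exact ⟨w, hw.symm⟩
  have key : Matrix.scalar (Fin N) (w ^ 2) - B * B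
      = (Matrix.scalar (Fin N) w - B) * (-(Matrix.scalar (Fin N) (-w) - B)) := by
    have hcm : Matrix.scalar (Fin N) w * B = B * Matrix.scalar (Fin N) w :=
      (Matrix.scalar_commute w (fun r => mul_comm _ _) B).eq
    rw [map_neg, map_pow]
    generalize Matrix.scalar (Fin N) w = S at hcm
    have : (S - B) * (-(-S - B)) = S ^ 2 - B * B + (S * B - B * S) := by noncomm_ring
    rw [this, hcm, sub_self, add_zero]
  rw [Matrix.eval_charpoly, key, Matrix.det_mul, Matrix.det_neg, ← Matrix.eval_charpoly,
    ← Matrix.eval_charpoly, hB, hB, Fintype.card_fin]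
  have h3 : (-1 : ℂ) ^ N * (B.charpoly.roots.map fun z => -w - z).prod
      = (B.charpoly.roots.map fun z => w + z).prod := by
    generalize B.charpoly.roots = R at hc
    subst hc
    rw [← Multiset.card_map (fun z => -w - z), ← Multiset.prod_map_neg, Multiset.map_map]
    congr 1
    apply Multiset.map_congr rfl
    intro z _
    simp [add_comm]
  rw [h3, ← Multiset.prod_map_mul, eval_multiset_prod, Multiset.map_map, Multiset.map_map]
  congr 1
  apply Multiset.map_congr rfl
  intro z _
  simp
  ring

lemma aux_deriv (n : ℕ) (hn : 2 ≤ n) (Λ : Multiset ℂ) (hcard : Λ.card = n)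
    (p : Polynomial ℂ) (hp : p = (Λ.map fun l => X - C l).prod) :
    (p.derivative.roots.map fun z => z ^ 2).sum
        = (((n : ℂ) - 2) / (n : ℂ)) * (Λ.map fun z => z ^ 2).sum
          + (1 / (n : ℂ) ^ 2) * Λ.sum ^ 2 := by
  have hn0 : (n : ℂ) ≠ 0 := by
    have : n ≠ 0 := by omega
    exact_mod_cast this
  have hm : p.Monic := hp ▸ monic_multiset_prod_of_monic _ _ fun l _ => monic_X_sub_C l
  have hd : p.natDegree = n := by
    rw [hp, natDegree_multiset_prod_X_sub_C_eq_card, hcard]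
  have hd' : p.derivative.natDegree = n - 1 := by
    rw [natDegree_derivative, hd]
  have hl : p.derivative.leadingCoeff = n := by
    have h1 : p.coeff (n - 1 + 1) = 1 := by
      rw [Nat.sub_add_cancel (by omega), ← hd]; exact hm
    rw [leadingCoeff, hd', coeff_derivative, h1]
    have : ((n - 1 : ℕ) : ℂ) + 1 = n := by
      rw [← Nat.cast_succ]; congr 1; omega
    rw [this, one_mul]
  obtain ⟨m, rfl⟩ : ∃ m, n = m + 2 := ⟨n - 2, by omega⟩
  have hs := IsAlgClosed.splits p.derivative
  have hcr : p.derivative.roots.card = m + 1 := by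
    rw [IsAlgClosed.card_roots_eq_natDegree, hd']; rfl
  have E1 : ((m : ℂ) + 2) * p.derivative.roots.esymm 1 = (m + 1) * Λ.esymm 1 := by
    have h := coeff_eq_esymm_roots_of_splits hs (k := m) (by omega)
    have h' := Multiset.prod_X_sub_C_coeff Λ (k := m + 1) (by omega)
    rw [← hp, hcard, show m + 2 - (m + 1) = 1 by omega] at h'
    rw [coeff_derivative, h', hl, hd', show m + 2 - 1 - m = 1 by omega] at h
    push_cast at h
    linear_combination h
  have E2 : ((m : ℂ) + 2) * p.derivative.roots.esymm 2 = m * Λ.esymm 2 := by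
    rcases m with _ | m
    · have : p.derivative.roots.esymm 2 = 0 := by
        rw [Multiset.esymm, Multiset.powersetCard_eq_empty]
        · simp
        · omega
      rw [this]; simp
    have h := coeff_eq_esymm_roots_of_splits hs (k := m) (by omega)
    have h' := Multiset.prod_X_sub_C_coeff Λ (k := m + 1) (by omega)
    rw [← hp, hcard, show m + 1 + 2 - (m + 1) = 2 by omega] at h'
    rw [coeff_derivative, h', hl, hd', show m + 1 + 2 - 1 - m = 2 by omega] at h
    push_cast at h ⊢
    linear_combination -h
  obtain ⟨A1, -⟩ := aux_newton p.derivative.roots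
  obtain ⟨B1, B2⟩ := aux_newton Λ
  rw [A1, B1, ← B2]
  push_cast at hn0 ⊢
  have E1' : p.derivative.roots.esymm 1 = (m + 1) * Λ.esymm 1 / ((m : ℂ) + 2) := by
    rw [eq_div_iff hn0, ← E1]; ring
  have E2' : p.derivative.roots.esymm 2 = m * Λ.esymm 2 / ((m : ℂ) + 2) := by
    rw [eq_div_iff hn0, ← E2]; ring
  rw [E1', E2']
  field_simp
  ring

lemma aux_real (Λ : Multiset ℂ) (h : Realizable Λ) :
    ∃ a b : ℝ, 0 ≤ b ∧ Λ.sum = (a : ℂ) ∧ (Λ.map fun z => z ^ 2).sum = (b : ℂ) := by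
  obtain ⟨N, A, hA, hΛ⟩ := h
  rw [← Matrix.charpoly_map] at hΛ
  rw [← hΛ]
  refine ⟨A.trace, (A * A).trace, ?_, ?_, ?_⟩
  · simp only [Matrix.trace, Matrix.diag, Matrix.mul_apply]
    exact Finset.sum_nonneg fun i _ => Finset.sum_nonneg fun j _ => mul_nonneg (hA _ _) (hA _ _)
  · rw [← Matrix.trace_eq_sum_roots_charpoly]
    simp [Matrix.trace]
  · have h := Matrix.trace_eq_sum_roots_charpoly (A.map (algebraMap ℝ ℂ) * A.map (algebraMap ℝ ℂ))
    rw [aux_charpoly_sq, roots_multiset_prod_X_sub_C] at h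
    rw [← h, ← Matrix.map_mul]
    simp [Matrix.trace]

/-- s₂(Λ') = ((n-2)/n)·s₂(Λ) + (1/n²)·s₁(Λ)²; in particular, if Λ is
realizable then s₂(Λ') is a nonnegative real number. -/
theorem second_moment_of_critical_points (n : ℕ) (hn : 2 ≤ n)
    (Λ : Multiset ℂ) (hcard : Λ.card = n)
    (p : Polynomial ℂ) (hp : p = (Λ.map fun l => X - C l).prod)
    (Λ' : Multiset ℂ) (hΛ' : Λ' = p.derivative.roots) :
    (Λ'.map fun z => z ^ 2).sum
        = (((n : ℂ) - 2) / (n : ℂ)) * (Λ.map fun z => z ^ 2).sum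
          + (1 / (n : ℂ) ^ 2) * Λ.sum ^ 2 ∧
      (Realizable Λ →
        ((Λ'.map fun z => z ^ 2).sum).im = 0 ∧ 0 ≤ ((Λ'.map fun z => z ^ 2).sum).re) := by
  have key := aux_deriv n hn Λ hcard p hp
  rw [← hΛ'] at key
  refine ⟨key, fun hR => ?_⟩
  obtain ⟨a, b, hb, h1, h2⟩ := aux_real Λ hR
  have hn' : (2 : ℝ) ≤ n := by exact_mod_cast hn
  have hfin : (Λ'.map fun z => z ^ 2).sum
      = ((((n : ℝ) - 2) / n * b + 1 / (n : ℝ) ^ 2 * a ^ 2 : ℝ) : ℂ) := by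
    rw [key, h1, h2]; push_cast; rfl
  rw [hfin]
  refine ⟨Complex.ofReal_im _, ?_⟩
  rw [Complex.ofReal_re]
  have : 0 ≤ (n : ℝ) - 2 := by linarith
  positivity
end

section
/- If Λ = {λ_1,…,λ_n} (n ≥ 2) is a Suleĭmanova spectrum, then the multiset Λ' of critical points of Λ is also a Suleĭmanova spectrum (with n − 1 elements). -/
open Polynomial

lemma sul_aux (M : Multiset ℝ) (hM : ∀ l ∈ M, l < 0) :
    (∀ x : ℝ, 0 ≤ x → 0 < ((M.map fun l => X - C l).prod).eval x ∧
      0 ≤ ((M.map fun l => X - C l).prod).derivative.eval x ∧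
      0 ≤ ((M.map fun l => X - C l).prod).derivative.eval x ^ 2 -
        ((M.map fun l => X - C l).prod).eval x *
        ((M.map fun l => X - C l).prod).derivative.derivative.eval x) ∧
    (∀ x y : ℝ, 0 ≤ x → x ≤ y →
      ((M.map fun l => X - C l).prod).derivative.eval y * ((M.map fun l => X - C l).prod).eval x ≤
      ((M.map fun l => X - C l).prod).derivative.eval x *
        ((M.map fun l => X - C l).prod).eval y) := by
  induction M using Multiset.induction_on with
  | empty => simp
  | cons l M ih =>
    have hl : l < 0 := hM l (by simp)
    obtain ⟨h1, h2⟩ := ih (fun k hk => hM k (by simp [hk]))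
    simp only [Multiset.map_cons, Multiset.prod_cons]
    generalize (M.map fun l => X - C l).prod = u at h1 h2
    refine ⟨fun x hx => ?_, fun x y hx hxy => ?_⟩
    · obtain ⟨a, b, c⟩ := h1 x hx
      have hxl : 0 < x - l := by linarith
      simp only [derivative_mul, derivative_add, derivative_sub, derivative_X, derivative_C,
        eval_add, eval_mul, eval_sub, eval_X, eval_C, sub_zero, one_mul]
      refine ⟨by positivity, by positivity, ?_⟩
      have := mul_nonneg (sq_nonneg (x - l)) c
      nlinarith [sq_nonneg (eval x u)]
    · obtain ⟨a, b, c⟩ := h1 x hx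
      obtain ⟨a', b', c'⟩ := h1 y (hx.trans hxy)
      have h := h2 x y hx hxy
      have hxl : 0 < x - l := by linarith
      have hyl : 0 < y - l := by linarith
      simp only [derivative_mul, derivative_sub, derivative_X, derivative_C,
        eval_add, eval_mul, eval_sub, eval_X, eval_C, sub_zero, one_mul]
      have e1 := mul_nonneg (mul_pos hxl hyl).le (sub_nonneg.2 h)
      have e2 := mul_nonneg (mul_pos a a').le (sub_nonneg.2 hxy)
      nlinarith

/-- if Λ is a Suleĭmanova spectrum (a real list with nonnegative sum
and exactly one nonnegative entry), then the multiset Λ' of critical points of Λ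
is also a Suleĭmanova spectrum with n - 1 elements (in particular all critical
points are real). -/
theorem critical_points_of_suleimanova (n : ℕ) (hn : 2 ≤ n)
    (Λ : Multiset ℝ) (hcard : Λ.card = n)
    (hsum : 0 ≤ Λ.sum)
    (hone : (Λ.filter fun x => 0 ≤ x).card = 1)
    (p : Polynomial ℝ) (hp : p = (Λ.map fun l => X - C l).prod)
    (Λ' : Multiset ℝ) (hΛ' : Λ' = p.derivative.roots) :
    Λ'.card = n - 1 ∧ 0 ≤ Λ'.sum ∧ (Λ'.filter fun x => 0 ≤ x).card = 1 := by
  have hroots : p.roots = Λ := by rw [hp]; exact roots_multiset_prod_X_sub_C Λ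
  have hmonic : p.Monic := by rw [hp]; exact monic_multisetProd_X_sub_C Λ
  have hdeg : p.natDegree = n := by
    rw [hp, natDegree_multiset_prod_X_sub_C_eq_card, hcard]
  have hsplit : p.Splits := by
    rw [splits_iff_card_roots, hroots, hdeg, hcard]
  have hddeg : p.derivative.natDegree = n - 1 := by
    rw [natDegree_derivative, hdeg]
  have hd0 : p.derivative ≠ 0 := by
    intro h; rw [h] at hddeg; simp at hddeg; omega
  have hcard' : Λ'.card = n - 1 := by
    have h1 := card_roots_le_derivative p
    have h2 := card_roots' p.derivative
    rw [hroots, hcard] at h1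
    rw [hddeg] at h2
    rw [hΛ']; omega
  have hdsplit : p.derivative.Splits := by
    rw [splits_iff_card_roots, ← hΛ', hcard', hddeg]
  have hsum' : 0 ≤ Λ'.sum := by
    obtain ⟨m, rfl⟩ : ∃ m, n = m + 2 := ⟨n - 2, by omega⟩
    have h1 := hsplit.nextCoeff_eq_neg_sum_roots_of_monic hmonic
    have h2 := hdsplit.nextCoeff_eq_neg_sum_roots_mul_leadingCoeff
    rw [nextCoeff_of_natDegree_pos (by omega), hdeg, hroots] at h1
    rw [nextCoeff_of_natDegree_pos (by omega), leadingCoeff, hddeg, ← hΛ', coeff_derivative,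
      coeff_derivative] at h2
    have h3 : p.coeff (m + 2) = 1 := by rw [← hdeg]; exact hmonic
    simp only [Nat.add_sub_cancel, show m + 2 - 1 = m + 1 by omega, show m + 1 + 1 = m + 2 by omega,
      h3] at h1 h2
    rw [h1] at h2
    push_cast at h2
    have hm : (0 : ℝ) ≤ m := Nat.cast_nonneg m
    have : 0 ≤ Λ.sum * ((m : ℝ) + 1) := by positivity
    by_contra hneg
    push Not at hneg
    nlinarith
  refine ⟨hcard', hsum', le_antisymm ?_ ?_⟩
  · obtain ⟨a, ha⟩ := Multiset.card_eq_one.1 hone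
    have haΛ : a ∈ Λ.filter fun x => 0 ≤ x := by rw [ha]; simp
    have ha0 : 0 ≤ a := (Multiset.mem_filter.1 haΛ).2
    have hdec : Λ = a ::ₘ Λ.filter fun x => ¬ 0 ≤ x := by
      conv_lhs => rw [← Multiset.filter_add_not (fun x : ℝ => 0 ≤ x) Λ, ha]
      simp
    have hneg : ∀ l ∈ Λ.filter fun x => ¬ 0 ≤ x, l < 0 := fun l hl =>
      not_le.1 (Multiset.mem_filter.1 hl).2
    generalize (Λ.filter fun x => ¬ 0 ≤ x) = M at hdec hneg
    obtain ⟨h1, h2⟩ := sul_aux M hneg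
    rw [hdec, Multiset.map_cons, Multiset.prod_cons] at hp
    generalize (M.map fun l => X - C l).prod = q at h1 h2 hp
    have hr : ∀ r, p.derivative.eval r = q.eval r + (r - a) * q.derivative.eval r := by
      intro r; rw [hp]; simp [derivative_mul]
    have hr2 : ∀ r, p.derivative.derivative.eval r =
        2 * q.derivative.eval r + (r - a) * q.derivative.derivative.eval r := by
      intro r; rw [hp]; simp [derivative_mul]; ring
    have hlt : ∀ r, 0 ≤ r → p.derivative.eval r = 0 → r < a ∧ 0 < q.derivative.eval r := by
      intro r h0 h
      rw [hr] at h
      obtain ⟨u, v, w⟩ := h1 r h0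
      have hra : r < a := by
        by_contra hc
        have := mul_nonneg (sub_nonneg.2 (not_lt.1 hc)) v
        linarith
      refine ⟨hra, lt_of_le_of_ne v ?_⟩
      intro hz
      rw [← hz] at h
      linarith
    have huniq : ∀ r s, 0 ≤ r → r < s → p.derivative.eval r = 0 → p.derivative.eval s = 0 →
        False := by
      intro r s h0 hrs her hes
      obtain ⟨b1, c1⟩ := hlt r h0 her
      obtain ⟨b2, c2⟩ := hlt s (by linarith) hes
      rw [hr] at her hes
      have h := h2 r s h0 hrs.le
      have e1 : q.eval r = (a - r) * q.derivative.eval r := by linarith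
      have e2 : q.eval s = (a - s) * q.derivative.eval s := by linarith
      rw [e1, e2] at h
      have := mul_pos (mul_pos c1 c2) (sub_pos.2 hrs)
      nlinarith
    by_contra hc
    push Not at hc
    obtain ⟨r, hrm⟩ := Multiset.card_pos_iff_exists_mem.1 (by omega : 0 < (Λ'.filter fun x => 0 ≤ x).card)
    obtain ⟨t, ht⟩ := Multiset.exists_cons_of_mem hrm
    rw [ht, Multiset.card_cons] at hc
    obtain ⟨s, hsm⟩ := Multiset.card_pos_iff_exists_mem.1 (by omega : 0 < t.card)
    obtain ⟨t', rfl⟩ := Multiset.exists_cons_of_mem hsm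
    have hsm' : s ∈ Λ'.filter fun x => 0 ≤ x := by rw [ht]; simp
    obtain ⟨hr1, hr0⟩ := Multiset.mem_filter.1 hrm
    obtain ⟨hs1, hs0⟩ := Multiset.mem_filter.1 hsm'
    rw [hΛ', mem_roots hd0, IsRoot.def] at hr1 hs1
    rcases lt_trichotomy r s with hlt' | rfl | hlt'
    · exact huniq r s hr0 hlt' hr1 hs1
    · have hcount : 2 ≤ Λ'.count r := by
        refine le_trans ?_ (Multiset.count_le_of_le r (Multiset.filter_le (fun x => 0 ≤ x) Λ'))
        rw [ht]; simp
      rw [hΛ', count_roots] at hcount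
      have hz := ((one_lt_rootMultiplicity_iff_isRoot hd0).1 hcount).2
      rw [IsRoot.def, hr2] at hz
      obtain ⟨b1, c1⟩ := hlt r hr0 hr1
      obtain ⟨u, v, w⟩ := h1 r hr0
      rw [hr] at hr1
      have e1 : q.eval r = (a - r) * q.derivative.eval r := by linarith
      have e2 : 2 * q.derivative.eval r = (a - r) * q.derivative.derivative.eval r := by linarith
      have e3 : q.eval r * q.derivative.derivative.eval r = 2 * q.derivative.eval r ^ 2 := by
        rw [e1, mul_right_comm, ← e2]; ring
      have := pow_pos c1 2
      linarith
    · exact huniq s r hs0 hlt' hs1 hr1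
  · by_contra hc
    have h0 : (Λ'.filter fun x => 0 ≤ x) = 0 := by
      rw [← Multiset.card_eq_zero]; omega
    rw [Multiset.filter_eq_nil] at h0
    obtain ⟨r, hrm⟩ := Multiset.card_pos_iff_exists_mem.1 (by omega : 0 < Λ'.card)
    obtain ⟨t, rfl⟩ := Multiset.exists_cons_of_mem hrm
    rw [Multiset.sum_cons] at hsum'
    have hr := h0 r hrm
    have ht : t.sum ≤ 0 := by
      have := Multiset.sum_le_card_nsmul t 0 (fun x hx => (not_le.1 (h0 x (by simp [hx]))).le)
      simpa using this
    linarith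
end

section
/- Let p(t) = ∏_{i=1}^n (t − λ_i) be a polynomial of degree n ≥ 2 with complex roots λ_1,…,λ_n, let D = diag(λ_2,…,λ_n) ∈ M_{n−1}(ℂ), and let I and J denote the (n−1)-by-(n−1) identity and all-ones matrices. Then the characteristic polynomial of the d-companion matrix A = D(I − (1/n)J) + (λ_1/n)J equals (1/n)·p'(t); equivalently, the multiset of eigenvalues of A (with multiplicity) is the multiset of critical points of p. -/
open Polynomial

lemma det_aux_field {K : Type*} [Field K] {m : ℕ} (a u : Fin m → K) (ha : ∀ i, a i ≠ 0) :
    (Matrix.diagonal a + Matrix.of fun i _ => u i).det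
      = ∏ i, a i + ∑ i, u i * ∏ j ∈ Finset.univ.erase i, a j := by
  have h : (Matrix.diagonal a + Matrix.of fun i _ => u i)
      = Matrix.diagonal a * (1 + Matrix.replicateCol Unit (fun i => u i / a i) *
          Matrix.replicateRow Unit (fun _ => (1 : K))) := by
    rw [Matrix.mul_add, Matrix.mul_one]
    congr 1
    ext i j
    rw [Matrix.diagonal_mul]
    have := ha i
    simp [Matrix.mul_apply]
    field_simp
  rw [h, Matrix.det_mul, Matrix.det_diagonal, Matrix.det_one_add_replicateCol_mul_replicateRow,
    mul_add, mul_one]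
  congr 1
  simp only [dotProduct, one_mul]
  rw [Finset.mul_sum]
  refine Finset.sum_congr rfl fun i _ => ?_
  rw [← Finset.mul_prod_erase Finset.univ a (Finset.mem_univ i)]
  have := ha i
  field_simp

lemma det_aux {R : Type*} [CommRing R] [IsDomain R] {m : ℕ} (a u : Fin m → R)
    (ha : ∀ i, a i ≠ 0) :
    (Matrix.diagonal a + Matrix.of fun i _ => u i).det
      = ∏ i, a i + ∑ i, u i * ∏ j ∈ Finset.univ.erase i, a j := by
  apply IsFractionRing.injective R (FractionRing R)
  have h := det_aux_field (fun i => algebraMap R (FractionRing R) (a i))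
    (fun i => algebraMap R (FractionRing R) (u i))
    (fun i => by
      simpa using ha i)
  rw [RingHom.map_det]
  simp only [map_add, map_sum, map_mul, map_prod]
  rw [← h]
  congr 1
  ext i j
  by_cases hij : i = j
  · subst hij; simp
  · simp [hij]

/-- the characteristic polynomial of the d-companion matrix
A = D(I - (1/n)J) + (λ₁/n)J of p(t) = ∏ (t - λᵢ) equals (1/n)·p'; equivalently,
the multiset of eigenvalues of A (with multiplicity) is the multiset of critical
points of p. -/
theorem d_companion_charpoly (n : ℕ) (hn : 2 ≤ n) (lam : Fin n → ℂ)
    (p : Polynomial ℂ) (hp : p = ∏ i, (X - C (lam i)))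
    (D : Matrix (Fin (n - 1)) (Fin (n - 1)) ℂ)
    (hD : D = Matrix.diagonal fun i : Fin (n - 1) => lam ⟨(i : ℕ) + 1, by have := i.isLt; omega⟩)
    (J : Matrix (Fin (n - 1)) (Fin (n - 1)) ℂ)
    (hJ : J = Matrix.of fun _ _ => 1)
    (A : Matrix (Fin (n - 1)) (Fin (n - 1)) ℂ)
    (hA : A = D * (1 - ((n : ℂ))⁻¹ • J) + ((lam ⟨0, by omega⟩) / (n : ℂ)) • J) :
    A.charpoly = C ((n : ℂ))⁻¹ * p.derivative ∧
      A.charpoly.roots = p.derivative.roots := by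
  have key : A.charpoly = C ((n : ℂ))⁻¹ * p.derivative := by
    obtain ⟨m, rfl⟩ : ∃ m, n = m + 1 := ⟨n - 1, by omega⟩
    change Matrix (Fin m) (Fin m) ℂ at D J A
    let a : Fin m → ℂ[X] := fun i => X - C (lam i.succ)
    let u : Fin m → ℂ[X] := fun i => C (((m + 1 : ℕ) : ℂ))⁻¹ * (C (lam i.succ) - C (lam 0))
    have hn0 : (((m + 1 : ℕ) : ℂ)) ≠ 0 := Nat.cast_ne_zero.mpr (by omega)
    have hA' : A.charmatrix = Matrix.diagonal a + Matrix.of fun i _ => u i := by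
      have e : ∀ i j, A i j = (if i = j then lam i.succ else 0)
          - (((m + 1 : ℕ) : ℂ))⁻¹ * (lam i.succ - lam 0) := by
        intro i j
        let J' : Matrix (Fin m) (Fin m) ℂ := Matrix.of fun _ _ => (1 : ℂ)
        let D' : Matrix (Fin m) (Fin m) ℂ := Matrix.diagonal (fun i : Fin m => lam i.succ)
        have hA2 : A = D' * (1 - (((m + 1 : ℕ) : ℂ))⁻¹ • J') +
            (lam 0 / ((m + 1 : ℕ) : ℂ)) • J' := by
          rw [hA, hD, hJ]
          rfl
        rw [hA2]
        simp only [D', J']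
        rw [Matrix.add_apply, Matrix.diagonal_mul]
        by_cases hij : i = j
        · subst hij
          simp [div_eq_mul_inv]; ring
        · simp [hij, div_eq_mul_inv]; ring
      ext1 i j
      rw [Matrix.charmatrix_apply, e]
      by_cases hij : i = j
      · subst hij
        simp only [Matrix.add_apply, Matrix.diagonal_apply_eq, Matrix.of_apply, a, u, if_true,
          C_sub, C_mul]
        ring
      · simp only [Matrix.add_apply, Matrix.diagonal_apply_ne _ hij, Matrix.of_apply, u, if_neg hij,
          C_sub, C_mul, C_0]
        ring
    have hc : A.charpoly = ∏ i, a i + ∑ i, u i * ∏ j ∈ Finset.univ.erase i, a j := by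
      rw [← det_aux a u (fun i => X_sub_C_ne_zero _), ← hA']
      rfl
    have hd : p.derivative = ∏ i, a i +
        (X - C (lam 0)) * ∑ i, ∏ j ∈ Finset.univ.erase i, a j := by
      rw [hp, Fin.prod_univ_succ, derivative_mul, derivative_prod_finset]
      simp [a]
    have hs : ∑ i, u i * ∏ j ∈ Finset.univ.erase i, a j = C (((m + 1 : ℕ) : ℂ))⁻¹ *
        ((X - C (lam 0)) * ∑ i, ∏ j ∈ Finset.univ.erase i, a j - (m : ℂ[X]) * ∏ i, a i) := by
      have : (m : ℂ[X]) * ∏ i, a i = ∑ i : Fin m, a i * ∏ j ∈ Finset.univ.erase i, a j := by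
        rw [Finset.sum_congr rfl fun i _ =>
          Finset.mul_prod_erase Finset.univ a (Finset.mem_univ i)]
        simp
      rw [this, Finset.mul_sum, ← Finset.sum_sub_distrib, Finset.mul_sum]
      refine Finset.sum_congr rfl fun i _ => ?_
      simp only [u]
      have : C (lam i.succ) = X - a i := by simp [a]
      rw [this]
      ring
    have h1 : C (((m + 1 : ℕ) : ℂ))⁻¹ * ((m : ℂ[X]) + 1) = 1 := by
      have : ((m : ℂ[X]) + 1) = C (((m + 1 : ℕ) : ℂ)) := by simp
      rw [this, ← C_mul, inv_mul_cancel₀ hn0, C_1]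
    rw [hc, hd, hs]
    linear_combination (-(∏ i, a i)) * h1
  refine ⟨key, ?_⟩
  rw [key, roots_C_mul]
  exact inv_ne_zero (Nat.cast_ne_zero.mpr (by omega))
end

section
/- Let Λ = {λ_1,…,λ_m, μ_1, μ̄_1,…,μ_n, μ̄_n} where λ_1,…,λ_m are real (m ≥ 1) and μ_1,…,μ_n have nonzero imaginary part, and set N = m + 2n ≥ 2. Define the real (N−1)-by-(N−1) matrices B = diag(λ_2,…,λ_m) ⊕ (⊕_{i=1}^n [[Re μ_i, Im μ_i], [−Im μ_i, Re μ_i]]) and K = [[J_{(m−1)×(m−1)}, G],[G^T, C]], where G = J_{(m−1)×n} ⊗ [√2, 0] and C = J_{n×n} ⊗ [[2,0],[0,0]] (J denotes an all-ones matrix of the indicated size). Then the real matrix B(I − (1/N)K) + (λ_1/N)K has as its multiset of eigenvalues, counted with multiplicity, exactly the critical points of Λ. -/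
open Polynomial

open Matrix in
lemma aux_det {ι : Type*} [Fintype ι] [DecidableEq ι] (B R : Matrix ι ι ℂ) (k : ι → ℂ)
    (z l c : ℂ) (hR : (Matrix.scalar ι z - B) * R = 1) :
    (Matrix.scalar ι z - (B * (1 - c • vecMulVec k k) + (l * c) • vecMulVec k k)).det
      = (Matrix.scalar ι z - B).det * (1 + c * (-(k ⬝ᵥ k) + (z - l) * (k ⬝ᵥ (R *ᵥ k)))) := by
  set u : ι → ℂ := c • (-k + (z - l) • (R *ᵥ k)) with hu
  have hAu : (Matrix.scalar ι z - B) *ᵥ u = c • (B *ᵥ k - l • k) := by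
    rw [hu, mulVec_smul, mulVec_add, mulVec_smul, mulVec_mulVec, hR, one_mulVec, mulVec_neg,
      sub_mulVec]
    congr 1
    have : (Matrix.scalar ι z) *ᵥ k = z • k := by
      ext i; simp [Matrix.scalar_apply, mulVec_diagonal]
    rw [this]
    ext i; simp; ring
  have hfac : Matrix.scalar ι z - (B * (1 - c • vecMulVec k k) + (l * c) • vecMulVec k k)
      = (Matrix.scalar ι z - B) * (1 + vecMulVec u k) := by
    rw [mul_add, mul_one, Matrix.mul_vecMulVec, hAu, mul_sub, mul_one, Matrix.mul_smul,
      Matrix.mul_vecMulVec]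
    ext i j
    simp [vecMulVec_apply]
    ring
  rw [hfac, det_mul]
  congr 1
  rw [vecMulVec_eq Unit, det_one_add_replicateCol_mul_replicateRow, hu]
  simp [dotProduct_add, dotProduct_smul]
  ring

open Matrix in
lemma aux_blocks {m n : ℕ} (x y : Fin m → ℂ) (S T : Fin n → Matrix (Fin 2) (Fin 2) ℂ)
    (h : ∀ i, x i * y i = 1) (hS : ∀ i, S i * T i = 1) :
    (fromBlocks (diagonal x) 0 0 ((blockDiagonal S).submatrix Prod.swap Prod.swap)
      : Matrix (Fin m ⊕ Fin n × Fin 2) (Fin m ⊕ Fin n × Fin 2) ℂ)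
      * fromBlocks (diagonal y) 0 0 ((blockDiagonal T).submatrix Prod.swap Prod.swap) = 1 := by
  have e : (blockDiagonal S).submatrix Prod.swap Prod.swap
      * (blockDiagonal T).submatrix (Prod.swap : Fin n × Fin 2 → _) Prod.swap = 1 := by
    have := Matrix.submatrix_mul_equiv (blockDiagonal S) (blockDiagonal T)
      (Prod.swap : Fin n × Fin 2 → _) (Equiv.prodComm (Fin n) (Fin 2)) (Prod.swap : Fin n × Fin 2 → _)
    rw [← blockDiagonal_mul] at this
    simp only [hS] at this
    have h1 : blockDiagonal (fun _ : Fin n => (1 : Matrix (Fin 2) (Fin 2) ℂ)) = 1 := 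
      blockDiagonal_one
    rw [h1] at this
    refine this.trans ?_
    exact Matrix.submatrix_one_equiv (Equiv.prodComm (Fin n) (Fin 2))
  rw [fromBlocks_multiply, e]
  simp [h, fromBlocks_one]

open Matrix in
lemma aux_blocks_det {m n : ℕ} (x : Fin m → ℂ) (S : Fin n → Matrix (Fin 2) (Fin 2) ℂ) :
    (fromBlocks (diagonal x) 0 0 ((blockDiagonal S).submatrix Prod.swap Prod.swap)
      : Matrix (Fin m ⊕ Fin n × Fin 2) (Fin m ⊕ Fin n × Fin 2) ℂ).det
      = (∏ i, x i) * ∏ i, (S i).det := by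
  rw [det_fromBlocks_zero₂₁, det_diagonal]
  congr 1
  rw [← det_blockDiagonal]
  exact det_submatrix_equiv_self (Equiv.prodComm (Fin n) (Fin 2)) _

noncomputable def auxk (m n : ℕ) : Fin m ⊕ Fin n × Fin 2 → ℂ :=
  Sum.elim (fun _ => 1) (fun q => if q.2 = 0 then ((Real.sqrt 2 : ℝ) : ℂ) else 0)

lemma aux_sqrt : ((Real.sqrt 2 : ℝ) : ℂ) * ((Real.sqrt 2 : ℝ) : ℂ) = 2 := by
  rw [← Complex.ofReal_mul, Real.mul_self_sqrt (by norm_num)]; norm_num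

open Matrix in
lemma auxk_dot (m n : ℕ) : auxk m n ⬝ᵥ auxk m n = m + 2 * n := by
  simp [auxk, dotProduct, Fintype.sum_prod_type, aux_sqrt, mul_comm]

open Matrix in
lemma auxk_quad {m n : ℕ} (y : Fin m → ℂ) (T : Fin n → Matrix (Fin 2) (Fin 2) ℂ) :
    auxk m n ⬝ᵥ ((fromBlocks (diagonal y) 0 0 ((blockDiagonal T).submatrix Prod.swap Prod.swap)
      : Matrix (Fin m ⊕ Fin n × Fin 2) (Fin m ⊕ Fin n × Fin 2) ℂ) *ᵥ auxk m n)
      = ∑ i, y i + ∑ i, 2 * T i 0 0 := by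
  simp [auxk, dotProduct, mulVec, Fintype.sum_prod_type, diagonal_apply, blockDiagonal_apply]
  refine Finset.sum_congr rfl fun i _ => ?_
  rw [← aux_sqrt]; ring

lemma aux_deriv_s13 (Λ : Multiset ℂ) (z : ℂ) (h : z ∉ Λ) :
    (derivative (Λ.map fun l => X - C l).prod).eval z
      = (Λ.map fun l => z - l).prod * (Λ.map fun l => (z - l)⁻¹).sum := by
  induction Λ using Multiset.induction_on with
  | empty => simp
  | cons a s ih =>
    simp only [Multiset.mem_cons, not_or] at h
    have h0 : z - a ≠ 0 := sub_ne_zero.2 h.1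
    have e : eval z (s.map fun l => X - C l).prod = (s.map fun l => z - l).prod := by
      rw [eval_multiset_prod, Multiset.map_map]; simp
    simp only [Multiset.map_cons, Multiset.prod_cons, Multiset.sum_cons, derivative_mul, eval_add,
      eval_mul, ih h.2, e]
    simp
    field_simp

open Matrix in
lemma aux_main (m n : ℕ) (lam : Fin (m + 1) → ℝ) (mu : Fin n → ℂ) (Λ : Multiset ℂ)
    (hΛ : Λ = (Finset.univ.val.map fun i : Fin (m + 1) => ((lam i : ℂ)))
        + (Finset.univ.val.map fun i : Fin n => mu i)
        + (Finset.univ.val.map fun i : Fin n => (starRingEnd ℂ) (mu i)))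
    (z : ℂ) (hz : z ∉ Λ) (N : ℕ) (hN : N = m + 1 + 2 * n)
    (Bc : Matrix (Fin m ⊕ Fin n × Fin 2) (Fin m ⊕ Fin n × Fin 2) ℂ)
    (hB : Bc = fromBlocks (diagonal fun i => (lam i.succ : ℂ)) 0 0 ((blockDiagonal fun i =>
      !![((mu i).re : ℂ), (mu i).im; -(mu i).im, (mu i).re]).submatrix Prod.swap Prod.swap)) :
    (N : ℂ) * (Bc * (1 - (N : ℂ)⁻¹ • vecMulVec (auxk m n) (auxk m n))
        + ((lam 0 : ℂ) * (N : ℂ)⁻¹) • vecMulVec (auxk m n) (auxk m n)).charpoly.eval z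
      = (derivative (Λ.map fun l => X - C l).prod).eval z := by
  have hN0 : (N : ℂ) ≠ 0 := by rw [hN]; exact_mod_cast (by omega)
  rw [aux_deriv_s13 Λ z hz]
  have h1 : ∀ i, z - (lam i : ℂ) ≠ 0 := fun i => sub_ne_zero.2 (by
    rintro rfl; apply hz; rw [hΛ]
    exact Multiset.mem_add.2 (Or.inl (Multiset.mem_add.2 (Or.inl
      (Multiset.mem_map_of_mem (fun i => ((lam i : ℂ))) (Finset.mem_univ_val i))))))
  have h2 : ∀ i, z - mu i ≠ 0 := fun i => sub_ne_zero.2 (by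
    rintro rfl; apply hz; rw [hΛ]; simp)
  have h3 : ∀ i, z - (starRingEnd ℂ) (mu i) ≠ 0 := fun i => sub_ne_zero.2 (by
    rintro rfl; apply hz; rw [hΛ]; simp)
  have hD : ∀ i, (z - (mu i).re) * (z - (mu i).re) + ((mu i).im : ℂ) * (mu i).im
      = (z - mu i) * (z - (starRingEnd ℂ) (mu i)) := by
    intro i
    have ha : mu i = (mu i).re + (mu i).im * Complex.I := (Complex.re_add_im _).symm
    have hb : (starRingEnd ℂ) (mu i) = (mu i).re - (mu i).im * Complex.I := by
      apply Complex.ext <;> simp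
    rw [hb]
    generalize (mu i).re = a at *
    generalize (mu i).im = b at *
    rw [ha]
    linear_combination ((b:ℂ)^2) * Complex.I_sq
  have hre : ∀ i, 2 * (z - (mu i).re) = (z - mu i) + (z - (starRingEnd ℂ) (mu i)) := by
    intro i
    have := Complex.add_conj (mu i)
    push_cast at this
    linear_combination this
  set x : Fin m → ℂ := fun i => z - lam i.succ with hx
  set S : Fin n → Matrix (Fin 2) (Fin 2) ℂ := fun i =>
    !![z - (mu i).re, -(mu i).im; (mu i).im, z - (mu i).re] with hS
  set T : Fin n → Matrix (Fin 2) (Fin 2) ℂ := fun i =>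
    ((z - mu i) * (z - (starRingEnd ℂ) (mu i)))⁻¹ •
    !![z - (mu i).re, (mu i).im; -(mu i).im, z - (mu i).re] with hT
  have hdet : ∀ i, (S i).det = (z - mu i) * (z - (starRingEnd ℂ) (mu i)) := by
    intro i; rw [← hD, hS, det_fin_two_of]; ring
  have hA : Matrix.scalar _ z - Bc
      = fromBlocks (diagonal x) 0 0 ((blockDiagonal S).submatrix Prod.swap Prod.swap) := by
    rw [hB]
    ext (i | ⟨i, a⟩) (j | ⟨j, b⟩)
    · by_cases hij : i = j <;> simp [Matrix.scalar_apply, diagonal_apply, hij, hx]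
    · simp [Matrix.scalar_apply, diagonal_apply]
    · simp [Matrix.scalar_apply, diagonal_apply]
    · by_cases hij : i = j
      · subst hij
        fin_cases a <;> fin_cases b <;>
          simp [Matrix.scalar_apply, diagonal_apply, blockDiagonal_apply, hS]
      · simp [Matrix.scalar_apply, diagonal_apply, blockDiagonal_apply, hij]
  have hST : ∀ i, S i * T i = 1 := by
    intro i
    have hne := mul_ne_zero (h2 i) (h3 i)
    rw [hS, hT]
    simp only
    rw [Matrix.mul_smul, inv_smul_eq_iff₀ hne, ← hD]
    ext a b
    fin_cases a <;> fin_cases b <;> simp [Matrix.mul_apply, Fin.sum_univ_two] <;> ring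
  have hR := aux_blocks x (fun i => (x i)⁻¹) S T (fun i => mul_inv_cancel₀ (h1 _)) hST
  rw [← hA] at hR
  rw [Matrix.eval_charpoly, aux_det _ _ _ _ _ _ hR, hA, aux_blocks_det, auxk_dot, auxk_quad]
  have hp : (Λ.map fun l => z - l).prod = (z - lam 0) * ((∏ i, x i) * ∏ i, (S i).det) := by
    rw [hΛ]
    simp only [Multiset.map_add, Multiset.prod_add, Multiset.map_map, Function.comp_def, hdet,
      Finset.prod_mul_distrib]
    change (∏ i : Fin (m+1), (z - (lam i : ℂ))) * (∏ i, (z - mu i))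
      * (∏ i, (z - (starRingEnd ℂ) (mu i))) = _
    rw [Fin.prod_univ_succ]; ring
  have hs : (Λ.map fun l => (z - l)⁻¹).sum
      = (z - lam 0)⁻¹ + (∑ i, (x i)⁻¹ + ∑ i, 2 * T i 0 0) := by
    rw [hΛ]
    simp only [Multiset.map_add, Multiset.sum_add, Multiset.map_map, Function.comp_def]
    change (∑ i : Fin (m+1), (z - (lam i : ℂ))⁻¹) + (∑ i, (z - mu i)⁻¹)
      + (∑ i, (z - (starRingEnd ℂ) (mu i))⁻¹) = _
    rw [Fin.sum_univ_succ, add_assoc, add_assoc, ← Finset.sum_add_distrib]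
    congr 2
    refine Finset.sum_congr rfl fun i _ => ?_
    have e : 2 * T i 0 0 = ((z - mu i) * (z - (starRingEnd ℂ) (mu i)))⁻¹ * (2 * (z - (mu i).re)) := by
      simp [hT]; ring
    rw [e, hre]
    have := h2 i
    have := h3 i
    field_simp
    ring
  rw [hp, hs]
  have hNc : (N : ℂ) = m + 1 + 2 * n := by rw [hN]; push_cast; ring
  generalize (∑ i, (x i)⁻¹ + ∑ i, 2 * T i 0 0) = s
  generalize ((∏ i, x i) * ∏ i, (S i).det) = d
  have h10 := h1 0
  have e1 : (m : ℂ) + 2 * n = N - 1 := by rw [hNc]; ring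
  rw [e1]
  field_simp
  ring

/-- a real construction of the d-companion matrix. For
Λ = {λ₁,…,λ_m, μ₁, μ̄₁,…,μ_n, μ̄_n} with the λᵢ real and the μᵢ non-real, and
N = m + 2n ≥ 2, the real matrix B(I - (1/N)K) + (λ₁/N)K (with B, K the block
matrices described in the paper, indexed here by Fin (m-1) ⊕ (Fin n × Fin 2))
has as its multiset of eigenvalues (with multiplicity) exactly the critical
points of Λ. -/
theorem real_d_companion (m n : ℕ) (hm : 1 ≤ m)
    (N : ℕ) (hN : N = m + 2 * n) (hN2 : 2 ≤ N)
    (lam : Fin m → ℝ) (mu : Fin n → ℂ) (hmu : ∀ i, (mu i).im ≠ 0)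
    (Λ : Multiset ℂ)
    (hΛ : Λ = (Finset.univ.val.map fun i : Fin m => ((lam i : ℂ)))
        + (Finset.univ.val.map fun i : Fin n => mu i)
        + (Finset.univ.val.map fun i : Fin n => (starRingEnd ℂ) (mu i)))
    (p : Polynomial ℂ) (hp : p = (Λ.map fun l => X - C l).prod)
    (B K : Matrix (Fin (m - 1) ⊕ Fin n × Fin 2) (Fin (m - 1) ⊕ Fin n × Fin 2) ℝ)
    (hB : B = Matrix.of fun i j =>
      match i, j with
      | Sum.inl i, Sum.inl j =>
          if i = j then lam ⟨(i : ℕ) + 1, by have := i.isLt; omega⟩ else 0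
      | Sum.inr (i, a), Sum.inr (j, b) =>
          if i = j then !![(mu i).re, (mu i).im; -(mu i).im, (mu i).re] a b else 0
      | _, _ => 0)
    (hK : K = Matrix.of fun i j =>
      match i, j with
      | Sum.inl _, Sum.inl _ => 1
      | Sum.inl _, Sum.inr (_, b) => if b = 0 then Real.sqrt 2 else 0
      | Sum.inr (_, a), Sum.inl _ => if a = 0 then Real.sqrt 2 else 0
      | Sum.inr (_, a), Sum.inr (_, b) => if a = 0 ∧ b = 0 then 2 else 0)
    (M : Matrix (Fin (m - 1) ⊕ Fin n × Fin 2) (Fin (m - 1) ⊕ Fin n × Fin 2) ℝ)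
    (hM : M = B * (1 - ((N : ℝ))⁻¹ • K) + ((lam ⟨0, by omega⟩) / (N : ℝ)) • K) :
    (M.map (algebraMap ℝ ℂ)).charpoly.roots = p.derivative.roots := by
  obtain ⟨m, rfl⟩ : ∃ m', m = m' + 1 := ⟨m - 1, by omega⟩
  have hN0 : (N : ℂ) ≠ 0 := by exact_mod_cast (by omega)
  have key : C (N : ℂ) * (M.map (algebraMap ℝ ℂ)).charpoly = derivative p := by
    apply Polynomial.eq_of_infinite_eval_eq
    have hfin : ({z : ℂ | z ∈ Λ.toFinset}).Finite := Λ.toFinset.finite_toSet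
    refine (hfin.infinite_compl).mono ?_
    intro z hz
    have hz' : z ∉ Λ := by simpa using hz
    simp only [Set.mem_setOf_eq, eval_mul, eval_C]
    rw [hp, ← aux_main m n lam mu Λ hΛ z hz' N hN _ rfl]
    congr 3
    have hBm : B.map (algebraMap ℝ ℂ) = Matrix.fromBlocks
        (Matrix.diagonal fun i : Fin m => (lam i.succ : ℂ)) 0 0 ((Matrix.blockDiagonal fun i =>
        !![((mu i).re : ℂ), (mu i).im; -(mu i).im, (mu i).re]).submatrix Prod.swap Prod.swap) := by
      rw [hB]
      ext (i | ⟨i, a⟩) (j | ⟨j, b⟩)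
      · by_cases hij : i = j
        · subst hij; simp; rfl
        · have : (Matrix.diagonal fun i : Fin m => (lam i.succ : ℂ)) i j = 0 :=
            Matrix.diagonal_apply_ne _ hij
          simp [hij, this]
      · simp
      · simp
      · by_cases hij : i = j
        · subst hij
          fin_cases a <;> fin_cases b <;> simp [Matrix.blockDiagonal_apply]
        · simp [Matrix.blockDiagonal_apply, hij]
    have hKm : K.map (algebraMap ℝ ℂ) = Matrix.vecMulVec (auxk m n) (auxk m n) := by
      rw [hK]
      ext (i | ⟨i, a⟩) (j | ⟨j, b⟩)
      · simp [Matrix.vecMulVec_apply, auxk]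
      · fin_cases b <;> simp [Matrix.vecMulVec_apply, auxk]
      · fin_cases a <;> simp [Matrix.vecMulVec_apply, auxk]
      · fin_cases a <;> fin_cases b <;> simp [Matrix.vecMulVec_apply, auxk, aux_sqrt]
    rw [← hBm, ← hKm, hM]
    ext i j
    simp [Matrix.mul_apply, Matrix.one_apply, div_eq_mul_inv, apply_ite]
  rw [← key, Polynomial.roots_C_mul _ hN0]
end

section
/- Let Λ = {λ_1,…,λ_n} (n ≥ 2) be a finite multiset of complex numbers, let U ∈ M_n(ℂ) be unitary, and suppose that for some i ∈ {1,…,n} every entry of the i-th row of U satisfies |u_{ij}| = 1/√n. If A = U D U* with D = diag(λ_1,…,λ_n), then the multiset of eigenvalues (with multiplicity) of the principal submatrix A_{(i)} obtained by deleting the i-th row and i-th column of A equals the multiset Λ' of critical points of Λ; equivalently, the characteristic polynomial of A_{(i)} equals (1/n)·p'(t), where p(t) = ∏_{j=1}^n (t − λ_j). -/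
open Polynomial Matrix

/-- The embedding Fin (n-1) → Fin n skipping index i. -/
def delIdx {n : ℕ} (i : Fin n) (j : Fin (n - 1)) : Fin n :=
  if h : (j : ℕ) < (i : ℕ) then ⟨j, by have := i.isLt; omega⟩
  else ⟨(j : ℕ) + 1, by have := j.isLt; have := i.isLt; omega⟩

/-- The principal submatrix of A obtained by deleting the i-th row and column. -/
def delSub {n : ℕ} {R : Type*} (A : Matrix (Fin n) (Fin n) R) (i : Fin n) :
    Matrix (Fin (n - 1)) (Fin (n - 1)) R :=
  A.submatrix (delIdx i) (delIdx i)


theorem adj_conj_aux {n : ℕ} {R : Type*} [CommRing R] (V W D : Matrix (Fin n) (Fin n) R)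
    (h : V * W = 1) : (V * D * W).adjugate = V * D.adjugate * W := by
  have h1 : W.adjugate = W.det • V := by
    calc W.adjugate = (V * W) * W.adjugate := by rw [h, one_mul]
      _ = W.det • V := by rw [Matrix.mul_assoc, Matrix.mul_adjugate]; simp
  have h2 : V.adjugate = V.det • W := by
    calc V.adjugate = V.adjugate * (V * W) := by rw [h, mul_one]
      _ = V.det • W := by rw [← Matrix.mul_assoc, Matrix.adjugate_mul]; simp
  have h3 : V.det * W.det = 1 := by rw [← Matrix.det_mul, h, Matrix.det_one]
  rw [Matrix.adjugate_mul_distrib, Matrix.adjugate_mul_distrib, h1, h2]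
  simp only [Matrix.smul_mul, Matrix.mul_smul, smul_smul, ← Matrix.mul_assoc]
  first
    | rw [h3, one_smul]
    | rw [mul_comm, h3, one_smul]

theorem delIdx_succ {m : ℕ} (i : Fin (m + 1)) : delIdx i = i.succAbove := by
  funext j
  ext
  simp only [delIdx, Fin.succAbove, Fin.lt_def, Fin.val_castSucc]
  split_ifs <;> simp

theorem delSub_charpoly {m : ℕ} (A : Matrix (Fin (m + 1)) (Fin (m + 1)) ℂ) (i : Fin (m + 1)) :
    (delSub A i).charpoly = A.charmatrix.adjugate i i := by
  rw [Matrix.adjugate_fin_succ_eq_det_submatrix, ← two_mul, pow_mul, neg_one_sq, one_pow, one_mul,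
    Matrix.charpoly]
  congr 1
  ext1 a b
  change (A.submatrix (delIdx i) (delIdx i)).charmatrix a b = _
  rw [delIdx_succ]
  simp only [Matrix.charmatrix_apply, Matrix.submatrix_apply, Matrix.diagonal_apply,
    (Fin.succAbove_right_injective (p := i)).eq_iff]

/-- if U is unitary with every entry of its i-th row of modulus
1/√n, and A = U D U* with D = diag(λ₁,…,λₙ), then the spectrum (with
multiplicity) of the principal submatrix A_{(i)} is the multiset of critical
points of Λ = {λ₁,…,λₙ}; equivalently, the characteristic polynomial of A_{(i)}
equals (1/n)·p'(t), where p(t) = ∏ (t - λⱼ). -/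
theorem hadamard_row_principal_submatrix (n : ℕ) (hn : 2 ≤ n)
    (lam : Fin n → ℂ)
    (U : Matrix (Fin n) (Fin n) ℂ) (hU : U ∈ Matrix.unitaryGroup (Fin n) ℂ)
    (i : Fin n) (hrow : ∀ j, ‖U i j‖ = 1 / Real.sqrt n)
    (A : Matrix (Fin n) (Fin n) ℂ)
    (hA : A = U * Matrix.diagonal lam * Uᴴ)
    (p : Polynomial ℂ) (hp : p = ∏ j, (X - C (lam j))) :
    (delSub A i).charpoly.roots = p.derivative.roots ∧
      (delSub A i).charpoly = C ((n : ℂ))⁻¹ * p.derivative := by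
  obtain ⟨m, rfl⟩ : ∃ m, n = m + 1 := ⟨n - 1, by omega⟩
  have hUU : U * Uᴴ = 1 := Matrix.mem_unitaryGroup_iff.mp hU
  have hVW : U.map (C : ℂ →+* ℂ[X]) * Uᴴ.map (C : ℂ →+* ℂ[X]) = 1 := by
    rw [← Matrix.map_mul, hUU]; simp
  have hchar : A.charmatrix = U.map (C : ℂ →+* ℂ[X]) *
      Matrix.diagonal (fun j => X - C (lam j)) * Uᴴ.map (C : ℂ →+* ℂ[X]) := by
    have hd : (Matrix.diagonal (fun j => X - C (lam j)) : Matrix (Fin (m+1)) (Fin (m+1)) ℂ[X])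
        = Matrix.scalar _ X - (Matrix.diagonal lam).map (C : ℂ →+* ℂ[X]) := by
      ext1 a b
      by_cases hab : a = b
      · subst hab; simp
      · simp [hab]
    rw [hd, Matrix.mul_sub, Matrix.sub_mul, ← Matrix.map_mul, ← Matrix.map_mul, ← hA,
      ← (Matrix.scalar_commute (X : ℂ[X]) (fun r => Commute.all _ _) _).eq, Matrix.mul_assoc,
      hVW, mul_one]
    rfl
  have hnorm : ∀ j, U i j * star (U i j) = ((m + 1 : ℕ) : ℂ)⁻¹ := by
    intro j
    have h0 : (0 : ℝ) ≤ ((m + 1 : ℕ) : ℝ) := Nat.cast_nonneg _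
    rw [Complex.star_def, Complex.mul_conj, Complex.normSq_eq_norm_sq, hrow j, div_pow,
      Real.sq_sqrt h0]
    push_cast
    simp
  have main : (delSub A i).charpoly = C (((m + 1 : ℕ) : ℂ))⁻¹ * p.derivative := by
    rw [delSub_charpoly, hchar, adj_conj_aux _ _ _ hVW, Matrix.adjugate_diagonal, Matrix.mul_apply,
      hp, derivative_prod_finset, Finset.mul_sum]
    refine Finset.sum_congr rfl fun j _ => ?_
    rw [Matrix.mul_diagonal, ← hnorm j]
    simp only [Matrix.map_apply, Matrix.conjTranspose_apply, C_mul, derivative_sub, derivative_X,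
      derivative_C, sub_zero, mul_one]
    ring
  refine ⟨?_, main⟩
  rw [main, roots_C_mul]
  exact inv_ne_zero (Nat.cast_ne_zero.mpr (Nat.succ_ne_zero m))
end

section
/- Let C ∈ M_n(ℂ) (n ≥ 2) be a circulant matrix and let Λ be the multiset of eigenvalues of C, counted with multiplicity. Then for every i ∈ {1,…,n}, the multiset of eigenvalues (with multiplicity) of the principal submatrix C_{(i)} obtained by deleting the i-th row and i-th column of C equals the multiset Λ' of critical points of Λ. -/
open Polynomial

theorem aux_derivative_det {m : ℕ} (M : Matrix (Fin m) (Fin m) ℂ[X]) :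
    derivative M.det = ∑ i, (M.updateRow i (fun j => derivative (M i j))).det := by
  simp only [← Matrix.det_transpose (M.updateRow _ _)]
  rw [← Matrix.det_transpose M]
  simp only [Matrix.det_apply', Matrix.transpose_apply]
  rw [derivative_sum, Finset.sum_comm]
  refine Finset.sum_congr rfl fun σ _ => ?_
  rw [← Finset.mul_sum, derivative_mul, derivative_intCast, zero_mul, zero_add,
    derivative_prod_finset]
  congr 1
  refine Finset.sum_congr rfl fun i _ => ?_
  rw [← Finset.prod_erase_mul _ _ (Finset.mem_univ i)]
  congr 1
  · refine Finset.prod_congr rfl fun j hj => ?_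
    rw [Matrix.updateRow_ne (Finset.ne_of_mem_erase hj)]
  · rw [Matrix.updateRow_self]

theorem aux_derivative_charpoly {m : ℕ} (A : Matrix (Fin m) (Fin m) ℂ) :
    derivative A.charpoly = ∑ i, (A.charmatrix).adjugate i i := by
  rw [Matrix.charpoly, aux_derivative_det]
  refine Finset.sum_congr rfl fun i _ => ?_
  rw [Matrix.adjugate_apply]
  congr 2
  funext j
  by_cases h : i = j
  · subst h; simp [Matrix.charmatrix_apply]
  · simp [Matrix.charmatrix_apply, h, Pi.single_apply, Ne.symm h]

theorem aux_delIdx {m : ℕ} (i : Fin (m+1)) (j : Fin m) :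
    delIdx i j = i.succAbove j := by
  ext
  simp only [delIdx, Fin.succAbove, Fin.lt_def, Fin.val_castSucc]
  split_ifs <;> simp

theorem aux_delSub {m : ℕ} (A : Matrix (Fin (m+1)) (Fin (m+1)) ℂ) (i : Fin (m+1)) :
    (delSub A i).charpoly = (A.charmatrix).adjugate i i := by
  rw [Matrix.adjugate_fin_succ_eq_det_submatrix, Even.neg_one_pow ⟨_, rfl⟩, one_mul,
    Matrix.charpoly]
  have hd : delSub A i = A.submatrix i.succAbove i.succAbove := by
    ext a b
    exact congrArg₂ A (aux_delIdx i a) (aux_delIdx i b)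
  rw [hd]
  refine congrArg Matrix.det ?_
  ext1 a b
  simp [Matrix.charmatrix_apply, Matrix.diagonal_apply]

/-- if A is an n-by-n circulant matrix with spectrum Λ (the multiset
of roots of its characteristic polynomial), then for every i the spectrum of the
principal submatrix A_{(i)} is the multiset of critical points of Λ. -/
theorem circulant_principal_submatrix (n : ℕ) (hn : 2 ≤ n)
    (A : Matrix (Fin n) (Fin n) ℂ)
    (hcirc : ∃ c : Fin n → ℂ, ∀ j k, A j k = c (k - j))
    (Λ : Multiset ℂ) (hΛ : Λ = A.charpoly.roots)
    (p : Polynomial ℂ) (hp : p = (Λ.map fun l => X - C l).prod) :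
    ∀ i, (delSub A i).charpoly.roots = p.derivative.roots := by
  obtain ⟨m, rfl⟩ : ∃ m, n = m + 1 := ⟨n - 1, by omega⟩
  obtain ⟨c, hc⟩ := hcirc
  intro i
  have hp' : p = A.charpoly := by
    rw [hp, hΛ]
    exact ((IsAlgClosed.splits A.charpoly).eq_prod_roots_of_monic A.charpoly_monic).symm
  have key : ∀ k, (A.charmatrix).adjugate k k = (A.charmatrix).adjugate i i := by
    intro k
    have h1 := Matrix.adjugate_submatrix_equiv_self (Equiv.addRight (k - i)) A.charmatrix
    have h2 : A.charmatrix.submatrix (Equiv.addRight (k - i)) (Equiv.addRight (k - i))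
        = A.charmatrix := by
      ext1 a b
      simp [Matrix.charmatrix_apply, Matrix.diagonal_apply, hc]
    rw [h2] at h1
    have h3 := congrFun (congrFun h1 i) i
    simpa using h3.symm
  have hd : derivative p = C ((m + 1 : ℕ) : ℂ) * (delSub A i).charpoly := by
    rw [hp', aux_derivative_charpoly, Finset.sum_congr rfl fun k _ => key k, aux_delSub]
    simp
  rw [hd, roots_C_mul _ (by exact_mod_cast Nat.succ_ne_zero m)]
end
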